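/- Let M, M' > 0, let R = {z ∈ ℂ : 0 < Re z < M, 0 < Im z < 1} and R' = {z ∈ ℂ : 0 < Re z < M', 0 < Im z < 1}. Suppose f : closure(R) → closure(R') is a homeomorphism which is holomorphic on R and satisfies f(0) = 0, f(M) = M', f(M + i) = M' + i, f(i) = i. Then M = M'. -/

import Mathlib

open Complex

/-!
If `f` carries each side of a rectangle into the corresponding side of another one, then `im f` is
constant on the horizontal sides and `re f` on the vertical ones, so the imaginary part of Cauchy's
theorem `∮ f dz = 0` around the boundary says that both rectangles have the same aspect ratio.

To see that `f` respects the sides, look at its inverse `g`. By the open mapping theorem `f` maps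
the interior into the interior, and it maps corners to corners; hence `g` maps an open side into the
boundary minus the corners. By connectedness its image lies in one side, which the images of the
endpoints determine, and by the intermediate value theorem it covers that whole side.
-/

section

open Set Filter Topology Interval

lemma isOpen_image_of_differentiableOn_of_injOn {f : ℂ → ℂ} {U : Set ℂ} (hU : IsOpen U)
    (hf : DifferentiableOn ℂ f U) (hinj : InjOn f U) : IsOpen (f '' U) := by
  refine isOpen_iff_mem_nhds.2 ?_
  rintro _ ⟨z, hz, rfl⟩
  have not_locally_constant : ¬ ∀ᶠ w in 𝓝 z, f w = f z := fun hconst => by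
    have hself : ∀ᶠ w in 𝓝[≠] z, w = z := nhdsWithin_le_nhds <| by
      filter_upwards [hconst, hU.mem_nhds hz] with w hw hwU using hinj hwU hz hw
    obtain ⟨w, hwz, hne⟩ := (hself.and self_mem_nhdsWithin).exists
    exact hne hwz
  exact (hf.analyticOnNhd hU z hz).eventually_constant_or_nhds_le_map_nhds.resolve_left
    not_locally_constant (image_mem_map (hU.mem_nhds hz))

lemma continuousOn_invFunOn_of_isCompact {X Y : Type*} [TopologicalSpace X] [TopologicalSpace Y]
    [T2Space Y] [Nonempty X] {f : X → Y} {K : Set X} {L : Set Y} (hK : IsCompact K)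
    (hf : ContinuousOn f K) (hbij : BijOn f K L) : ContinuousOn (Function.invFunOn f K) L := by
  refine continuousOn_iff_isClosed.2 fun t ht => ⟨f '' (K ∩ t),
    ((hK.inter_right ht).image_of_continuousOn (hf.mono inter_subset_left)).isClosed, ?_⟩
  have hleft := hbij.injOn.leftInvOn_invFunOn
  ext w
  constructor
  · rintro ⟨hwt, hwL⟩
    exact ⟨⟨_, ⟨hbij.surjOn.mapsTo_invFunOn hwL, hwt⟩, hbij.surjOn.rightInvOn_invFunOn hwL⟩, hwL⟩
  · rintro ⟨⟨z, ⟨hzK, hzt⟩, rfl⟩, hwL⟩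
    exact ⟨by rwa [mem_preimage, hleft hzK], hwL⟩

section Paths

variable {α β : Type*} [TopologicalSpace α] [T1Space α] [TopologicalSpace β] [T1Space β] {s t : ℝ}

lemma eq_left_of_mapsTo_Ioo_finite (hst : s < t) {x : ℝ → α} {X : Set α} (hX : X.Finite)
    (hx : ContinuousOn x (Icc s t)) (hmaps : MapsTo x (Ioo s t) X) :
    ∀ u ∈ Icc s t, x u = x s := by
  have hmaps_Icc : MapsTo x (Icc s t) X := by
    have h := hmaps.closure_of_continuousOn (by rwa [closure_Ioo hst.ne])
    rwa [closure_Ioo hst.ne, hX.isClosed.closure_eq] at h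
  exact fun u hu => isPreconnected_Icc.constant_of_mapsTo hX.isDiscrete hx hmaps_Icc hu
    (left_mem_Icc.2 hst.le)

lemma eq_left_of_xor_mem_finite (hst : s < t) {x : ℝ → α} {y : ℝ → β} {X : Set α} {Y : Set β}
    (hX : X.Finite) (hY : Y.Finite) (hx : ContinuousOn x (Icc s t)) (hy : ContinuousOn y (Icc s t))
    (hxor : ∀ u ∈ Ioo s t, Xor (x u ∈ X) (y u ∈ Y)) (hne : y s ≠ y t) :
    ∀ u ∈ Icc s t, x u = x s := by
  have hpre : IsPreconnected ((fun u => (x u, y u)) '' Ioo s t) :=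
    isPreconnected_Ioo.image _ ((hx.prodMk hy).mono Ioo_subset_Icc_self)
  have hdich : MapsTo x (Ioo s t) X ∨ MapsTo y (Ioo s t) Y := by
    have h := isPreconnected_iff_subset_of_disjoint_closed.1 hpre (Prod.fst ⁻¹' X) (Prod.snd ⁻¹' Y)
      (hX.isClosed.preimage continuous_fst) (hY.isClosed.preimage continuous_snd)
      (by rintro _ ⟨u, hu, rfl⟩; exact Xor.or (hxor u hu))
      (by
        refine eq_empty_of_forall_notMem ?_
        rintro _ ⟨⟨u, hu, rfl⟩, hboth⟩
        exact ((xor_iff_or_and_not_and _ _).1 (hxor u hu)).2 hboth)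
    exact h.imp (fun hX u hu => hX ⟨u, hu, rfl⟩) fun hY u hu => hY ⟨u, hu, rfl⟩
  refine hdich.elim (eq_left_of_mapsTo_Ioo_finite hst hX hx) fun hmaps => ?_
  exact absurd (eq_left_of_mapsTo_Ioo_finite hst hY hy hmaps t (right_mem_Icc.2 hst.le)).symm hne

lemma exists_eq_left_and_eq_of_xor_mem_finite (hst : s < t) {x : ℝ → α} {y : ℝ → ℝ} {X : Set α}
    {Y : Set ℝ} (hX : X.Finite) (hY : Y.Finite) (hx : ContinuousOn x (Icc s t))
    (hy : ContinuousOn y (Icc s t)) (hxor : ∀ u ∈ Ioo s t, Xor (x u ∈ X) (y u ∈ Y))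
    (hne : y s ≠ y t) {r : ℝ} (hr : r ∈ Icc (y s) (y t)) :
    ∃ u ∈ Icc s t, x u = x s ∧ y u = r := by
  obtain ⟨u, hu, hyu⟩ := intermediate_value_Icc hst.le hy hr
  exact ⟨u, hu, eq_left_of_xor_mem_finite hst hX hY hx hy hxor hne u hu, hyu⟩

end Paths

lemma apply_intervalIntegral_of_apply_eq_const {E : Type*} [NormedAddCommGroup E] [NormedSpace ℝ E]
    [CompleteSpace E] (L : E →L[ℝ] ℝ) {φ : ℝ → E} {s t c : ℝ} (hφ : ContinuousOn φ [[s, t]])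
    (hc : ∀ u ∈ [[s, t]], L (φ u) = c) : L (∫ u in s..t, φ u) = (t - s) * c := by
  rw [← L.intervalIntegral_comp_comm hφ.intervalIntegrable, intervalIntegral.integral_congr hc,
    intervalIntegral.integral_const, smul_eq_mul]

lemma mul_sub_eq_mul_sub_of_const_on_sides {f : ℂ → ℂ} {z w : ℂ} {c₀ c₁ d₀ d₁ : ℝ}
    (hcont : ContinuousOn f ([[z.re, w.re]] ×ℂ [[z.im, w.im]]))
    (hdiff : DifferentiableOn ℂ f
      (Ioo (min z.re w.re) (max z.re w.re) ×ℂ Ioo (min z.im w.im) (max z.im w.im)))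
    (hbottom : ∀ x ∈ [[z.re, w.re]], (f (x + z.im * I)).im = c₀)
    (htop : ∀ x ∈ [[z.re, w.re]], (f (x + w.im * I)).im = c₁)
    (hleft : ∀ y ∈ [[z.im, w.im]], (f (z.re + y * I)).re = d₀)
    (hright : ∀ y ∈ [[z.im, w.im]], (f (w.re + y * I)).re = d₁) :
    (w.re - z.re) * (c₁ - c₀) = (w.im - z.im) * (d₁ - d₀) := by
  have horizontal {v : ℝ} (hv : v ∈ [[z.im, w.im]]) :
      ContinuousOn (fun x : ℝ => f (x + v * I)) [[z.re, w.re]] :=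
    hcont.comp (by fun_prop) fun x hx => by simpa [mem_reProdIm] using ⟨hx, hv⟩
  have vertical {v : ℝ} (hv : v ∈ [[z.re, w.re]]) :
      ContinuousOn (fun y : ℝ => f (v + y * I)) [[z.im, w.im]] :=
    hcont.comp (by fun_prop) fun y hy => by simpa [mem_reProdIm] using ⟨hv, hy⟩
  have hcauchy := congrArg im
    (integral_boundary_rect_eq_zero_of_continuousOn_of_differentiableOn f z w hcont hdiff)
  have hI₀ := apply_intervalIntegral_of_apply_eq_const imCLM (horizontal left_mem_uIcc) hbottom
  have hI₁ := apply_intervalIntegral_of_apply_eq_const imCLM (horizontal right_mem_uIcc) htop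
  have hJ₀ := apply_intervalIntegral_of_apply_eq_const reCLM (vertical left_mem_uIcc) hleft
  have hJ₁ := apply_intervalIntegral_of_apply_eq_const reCLM (vertical right_mem_uIcc) hright
  simp only [imCLM_apply, reCLM_apply] at hI₀ hI₁ hJ₀ hJ₁
  simp only [add_im, sub_im, smul_eq_mul, I_mul_im, zero_im, hI₀, hI₁, hJ₀, hJ₁] at hcauchy
  linarith

/-- The grid of lines bounding the rectangle `[0, a] × [0, b]`, with the crossing points deleted.
Within the closed rectangle these are the four sides without the corners. -/
def openSides (a b : ℝ) : Set ℂ :=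
  {z | Xor (z.re ∈ ({0, a} : Set ℝ)) (z.im ∈ ({0, b} : Set ℝ))}

/-- `f` is an equivalence of the quadrilaterals `R(0, a, a + bi, bi)` and `R(0, a', a' + b'i, b'i)`:
it maps the first closed rectangle homeomorphically onto the second, is holomorphic in the interior,
and matches the marked vertices. Continuity of the inverse is left out, since it is automatic by
compactness. -/
structure IsRectangleEquiv (a b a' b' : ℝ) (f : ℂ → ℂ) : Prop where
  width_pos : 0 < a
  height_pos : 0 < b
  width_pos' : 0 < a'
  height_pos' : 0 < b'
  continuousOn : ContinuousOn f (Icc 0 a ×ℂ Icc 0 b)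
  bijOn : BijOn f (Icc 0 a ×ℂ Icc 0 b) (Icc 0 a' ×ℂ Icc 0 b')
  differentiableOn : DifferentiableOn ℂ f (Ioo 0 a ×ℂ Ioo 0 b)
  map_zero : f 0 = 0
  map_width : f a = a'
  map_width_add_height : f (a + b * I) = a' + b' * I
  map_height : f (b * I) = b' * I

namespace IsRectangleEquiv

variable {a b a' b' : ℝ} {f : ℂ → ℂ}

lemma mapsTo_interior (h : IsRectangleEquiv a b a' b' f) :
    MapsTo f (Ioo 0 a ×ℂ Ioo 0 b) (Ioo 0 a' ×ℂ Ioo 0 b') := by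
  have hsub : Ioo 0 a ×ℂ Ioo 0 b ⊆ Icc 0 a ×ℂ Icc 0 b :=
    inter_subset_inter (preimage_mono Ioo_subset_Icc_self) (preimage_mono Ioo_subset_Icc_self)
  have hopen : IsOpen (f '' (Ioo 0 a ×ℂ Ioo 0 b)) :=
    isOpen_image_of_differentiableOn_of_injOn (isOpen_Ioo.reProdIm isOpen_Ioo) h.differentiableOn
      (h.bijOn.injOn.mono hsub)
  have himage := interior_maximal (h.bijOn.mapsTo.mono_left hsub).image_subset hopen
  rwa [interior_reProdIm, interior_Icc, interior_Icc, image_subset_iff] at himage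

lemma map_corner (h : IsRectangleEquiv a b a' b' f) {z : ℂ}
    (hre : z.re ∈ ({0, a} : Set ℝ)) (him : z.im ∈ ({0, b} : Set ℝ)) :
    (f z).re ∈ ({0, a'} : Set ℝ) ∧ (f z).im ∈ ({0, b'} : Set ℝ) := by
  rw [← re_add_im z]
  rcases hre with hre | hre <;> rcases him with him | him <;> rw [hre, him] <;>
    simp [h.map_zero, h.map_width, h.map_width_add_height, h.map_height]

lemma mem_openSides_of_map_mem (h : IsRectangleEquiv a b a' b' f) {z : ℂ}
    (hz : z ∈ Icc 0 a ×ℂ Icc 0 b) (hfz : f z ∈ openSides a' b') : z ∈ openSides a b := by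
  rw [openSides, mem_ofPred_eq, xor_iff_or_and_not_and] at hfz ⊢
  refine ⟨?_, fun hcorner => hfz.2 (h.map_corner hcorner.1 hcorner.2)⟩
  by_contra! hinterior
  have hzint : z ∈ Ioo 0 a ×ℂ Ioo 0 b := by
    rw [← Icc_sdiff_both, ← Icc_sdiff_both]
    exact ⟨⟨hz.1, hinterior.1⟩, ⟨hz.2, hinterior.2⟩⟩
  have hfzint := h.mapsTo_interior hzint
  rw [← Icc_sdiff_both, ← Icc_sdiff_both] at hfzint
  exact hfz.1.elim hfzint.1.2 hfzint.2.2

lemma exists_lift_of_mapsTo_openSides (h : IsRectangleEquiv a b a' b' f) {γ : ℝ → ℂ} {s t : ℝ}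
    (hγ : ContinuousOn γ (Icc s t)) (hmaps : MapsTo γ (Icc s t) (Icc 0 a' ×ℂ Icc 0 b'))
    (hsides : MapsTo γ (Ioo s t) (openSides a' b')) :
    ∃ δ : ℝ → ℂ, ContinuousOn δ (Icc s t) ∧ MapsTo δ (Icc s t) (Icc 0 a ×ℂ Icc 0 b) ∧
      EqOn (f ∘ δ) γ (Icc s t) ∧ MapsTo δ (Ioo s t) (openSides a b) := by
  have hinv := continuousOn_invFunOn_of_isCompact (isCompact_Icc.reProdIm isCompact_Icc)
    h.continuousOn h.bijOn
  have hδ := h.bijOn.surjOn.mapsTo_invFunOn.comp hmaps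
  have hfδ : EqOn (f ∘ Function.invFunOn f (Icc 0 a ×ℂ Icc 0 b) ∘ γ) γ (Icc s t) :=
    h.bijOn.surjOn.rightInvOn_invFunOn.eqOn.comp_right hmaps
  refine ⟨_, hinv.comp hγ hmaps, hδ, hfδ, fun u hu => ?_⟩
  have huIcc := Ioo_subset_Icc_self hu
  exact h.mem_openSides_of_map_mem (hδ huIcc) ((hfδ huIcc).symm ▸ hsides hu :)

lemma im_map_of_horizontal_side (h : IsRectangleEquiv a b a' b' f) {v v' : ℝ}
    (hv : v ∈ Icc 0 b) (hv' : v' ∈ ({0, b'} : Set ℝ)) (hleft : f (v * I) = v' * I)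
    (hright : f (a + v * I) = a' + v' * I) : ∀ x ∈ Icc 0 a, (f (x + v * I)).im = v' := by
  intro x hx
  have hvIcc : v' ∈ Icc 0 b' := by rcases hv' with rfl | rfl <;> simp [h.height_pos'.le]
  obtain ⟨δ, hδ, hmaps, hfδ, hsides⟩ := h.exists_lift_of_mapsTo_openSides
    (γ := fun u : ℝ => u + v' * I) (s := 0) (t := a') (by fun_prop)
    (fun u hu => by simpa [mem_reProdIm] using ⟨hu, hvIcc⟩)
    (fun u hu => by
      have hu' : u ∉ ({0, a'} : Set ℝ) := by simp [hu.1.ne', hu.2.ne]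
      exact Or.inr (by simpa [-mem_insert_iff] using ⟨hv', hu'⟩))
  have hδ0 : δ 0 = v * I := h.bijOn.injOn (hmaps (left_mem_Icc.2 h.width_pos'.le))
    (by simpa [mem_reProdIm, h.width_pos.le] using hv)
    (by simpa [hleft] using hfδ (left_mem_Icc.2 h.width_pos'.le))
  have hδa : δ a' = a + v * I := h.bijOn.injOn (hmaps (right_mem_Icc.2 h.width_pos'.le))
    (by simpa [mem_reProdIm, h.width_pos.le] using hv)
    (by simpa [hright] using hfδ (right_mem_Icc.2 h.width_pos'.le))
  obtain ⟨u, hu, him, hre⟩ := exists_eq_left_and_eq_of_xor_mem_finite h.width_pos'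
    (toFinite {0, b}) (toFinite {0, a}) (continuous_im.comp_continuousOn hδ)
    (continuous_re.comp_continuousOn hδ) (fun u hu => (hsides hu).symm)
    (by simpa [hδ0, hδa] using h.width_pos.ne) (r := x) (by simpa [hδ0, hδa] using hx)
  have hδu : δ u = x + v * I := Complex.ext (by simpa using hre) (by simpa [hδ0] using him)
  rw [← hδu, ← Function.comp_apply (f := f), hfδ hu]
  simp

lemma re_map_of_vertical_side (h : IsRectangleEquiv a b a' b' f) {v v' : ℝ}
    (hv : v ∈ Icc 0 a) (hv' : v' ∈ ({0, a'} : Set ℝ)) (hbottom : f v = v')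
    (htop : f (v + b * I) = v' + b' * I) : ∀ y ∈ Icc 0 b, (f (v + y * I)).re = v' := by
  intro y hy
  have hvIcc : v' ∈ Icc 0 a' := by rcases hv' with rfl | rfl <;> simp [h.width_pos'.le]
  obtain ⟨δ, hδ, hmaps, hfδ, hsides⟩ := h.exists_lift_of_mapsTo_openSides
    (γ := fun u : ℝ => v' + u * I) (s := 0) (t := b') (by fun_prop)
    (fun u hu => by simpa [mem_reProdIm] using ⟨hvIcc, hu⟩)
    (fun u hu => by
      have hu' : u ∉ ({0, b'} : Set ℝ) := by simp [hu.1.ne', hu.2.ne]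
      exact Or.inl (by simpa [-mem_insert_iff] using ⟨hv', hu'⟩))
  have hδ0 : δ 0 = v := h.bijOn.injOn (hmaps (left_mem_Icc.2 h.height_pos'.le))
    (by simpa [mem_reProdIm, h.height_pos.le] using hv)
    (by simpa [hbottom] using hfδ (left_mem_Icc.2 h.height_pos'.le))
  have hδb : δ b' = v + b * I := h.bijOn.injOn (hmaps (right_mem_Icc.2 h.height_pos'.le))
    (by simpa [mem_reProdIm, h.height_pos.le] using hv)
    (by simpa [htop] using hfδ (right_mem_Icc.2 h.height_pos'.le))
  obtain ⟨u, hu, hre, him⟩ := exists_eq_left_and_eq_of_xor_mem_finite h.height_pos'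
    (toFinite {0, a}) (toFinite {0, b}) (continuous_re.comp_continuousOn hδ)
    (continuous_im.comp_continuousOn hδ) hsides
    (by simpa [hδ0, hδb] using h.height_pos.ne) (r := y) (by simpa [hδ0, hδb] using hy)
  have hδu : δ u = v + y * I := Complex.ext (by simpa [hδ0] using hre) (by simpa using him)
  rw [← hδu, ← Function.comp_apply (f := f), hfδ hu]
  simp

theorem width_mul_height_eq (h : IsRectangleEquiv a b a' b' f) : a * b' = b * a' := by
  have ha := h.width_pos.le
  have hb := h.height_pos.le
  have hbottom := h.im_map_of_horizontal_side (v := 0) (v' := 0) (by simp [hb]) (by simp)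
    (by simp [h.map_zero]) (by simp [h.map_width])
  have htop := h.im_map_of_horizontal_side (v := b) (v' := b') (by simp [hb]) (by simp)
    h.map_height h.map_width_add_height
  have hleft := h.re_map_of_vertical_side (v := 0) (v' := 0) (by simp [ha]) (by simp)
    (by simp [h.map_zero]) (by simp [h.map_height])
  have hright := h.re_map_of_vertical_side (v := a) (v' := a') (by simp [ha]) (by simp)
    h.map_width h.map_width_add_height
  rw [← uIcc_of_le ha] at hbottom htop
  rw [← uIcc_of_le hb] at hleft hright
  simpa using mul_sub_eq_mul_sub_of_const_on_sides (f := f) (z := 0) (w := ⟨a, b⟩)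
    (by simpa [uIcc_of_le, ha, hb] using h.continuousOn)
    (by simpa [ha, hb] using h.differentiableOn) hbottom htop hleft hright

end IsRectangleEquiv

end

theorem stmt_7 (M M' : ℝ) (hM : 0 < M) (hM' : 0 < M')
    (R R' : Set ℂ)
    (hR : R = {z : ℂ | 0 < z.re ∧ z.re < M ∧ 0 < z.im ∧ z.im < 1})
    (hR' : R' = {z : ℂ | 0 < z.re ∧ z.re < M' ∧ 0 < z.im ∧ z.im < 1})
    (f : ℂ → ℂ)
    (hcont : ContinuousOn f (closure R))
    (hbij : Set.BijOn f (closure R) (closure R'))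
    (hhol : DifferentiableOn ℂ f R)
    (h0 : f 0 = 0) (h1 : f (M : ℂ) = (M' : ℂ))
    (h2 : f ((M : ℂ) + Complex.I) = (M' : ℂ) + Complex.I)
    (h3 : f Complex.I = Complex.I) :
    M = M' := by
  have rect_eq (a : ℝ) : {z : ℂ | 0 < z.re ∧ z.re < a ∧ 0 < z.im ∧ z.im < 1} =
      Set.Ioo 0 a ×ℂ Set.Ioo 0 1 := by
    ext z; simp [mem_reProdIm, and_assoc]
  rw [rect_eq] at hR hR'
  rw [hR, closure_reProdIm, closure_Ioo hM.ne, closure_Ioo zero_ne_one] at hcont hbij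
  rw [hR', closure_reProdIm, closure_Ioo hM'.ne, closure_Ioo zero_ne_one] at hbij
  have hequiv : IsRectangleEquiv M 1 M' 1 f :=
    ⟨hM, one_pos, hM', one_pos, hcont, hbij, hR ▸ hhol, h0, h1, by simpa using h2,
      by simpa using h3⟩
  simpa using hequiv.width_mul_height_eq
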